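/- arXiv:2502.08055 — 5 statements merged into one kernel-verified Lean document; each statement's English description precedes it below -/
import Mathlib

section
/- Let n, t be natural numbers with n > 2·t, and let x, y : Fin n → ℝ satisfy x i ≤ y i for every i. Then the t-trimmed mean of x is less than or equal to the t-trimmed mean of y. -/
/-- The `k`-th order statistic (0-indexed) of `x : Fin n → ℝ`: the `k`-th entry of
the list obtained by sorting the `n` values of `x` in ascending order. -/
noncomputable def orderStat {n : ℕ} (x : Fin n → ℝ) (k : Fin n) : ℝ :=
  x (Tuple.sort x k)

/-- The `t`-trimmed mean of `x : Fin n → ℝ` (for `n > 2·t`): the average of the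
entries that remain after sorting `x` in ascending order and discarding the
smallest `t` and the largest `t` entries. -/
noncomputable def trimmedMean {n : ℕ} (t : ℕ) (x : Fin n → ℝ) : ℝ :=
  (∑ k ∈ Finset.univ.filter (fun k : Fin n => t ≤ (k : ℕ) ∧ (k : ℕ) < n - t),
      orderStat x k) / ((n - 2 * t : ℕ) : ℝ)

theorem exists_le_and_le_apply_of_injective {ι : Type*} [LinearOrder ι]
    [LocallyFiniteOrderBot ι] {e : ι → ι} (he : Function.Injective e) (k : ι) :
    ∃ i ≤ k, k ≤ e i := by
  by_contra! hlt
  have hmaps : Set.MapsTo e (Finset.Iic k) (Finset.Iio k) := by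
    simpa [Set.MapsTo] using hlt
  have hcard : (Finset.Iic k).card ≤ (Finset.Iio k).card :=
    Finset.card_le_card_of_injOn e hmaps he.injOn
  rw [Finset.Iic_eq_cons_Iio, Finset.card_cons] at hcard
  exact Nat.not_succ_le_self _ hcard

theorem comp_equiv_le_comp_equiv_of_monotone {ι κ α : Type*} [LinearOrder ι]
    [LocallyFiniteOrderBot ι] [Preorder α] {f g : κ → α} {σ τ : ι ≃ κ}
    (hf : Monotone (f ∘ σ)) (hg : Monotone (g ∘ τ)) (hfg : f ≤ g) :
    f ∘ σ ≤ g ∘ τ := by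
  intro k
  -- Pigeonhole gives an index `τ i` ranked at most `k` by `τ` and at least `k` by `σ`;
  -- its values under `f` and `g` interpolate between the two entries being compared.
  obtain ⟨i, hik, hki⟩ :=
    exists_le_and_le_apply_of_injective (τ.trans σ.symm).injective k
  calc
    f (σ k) ≤ f (σ (σ.symm (τ i))) := hf hki
    _ = f (τ i) := by rw [σ.apply_symm_apply]
    _ ≤ g (τ i) := hfg (τ i)
    _ ≤ g (τ k) := hg hik

theorem orderStat_mono {n : ℕ} {x y : Fin n → ℝ} (hxy : x ≤ y) (k : Fin n) :
    orderStat x k ≤ orderStat y k :=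
  comp_equiv_le_comp_equiv_of_monotone (Tuple.monotone_sort x) (Tuple.monotone_sort y) hxy k

/-- **Monotonicity of the trimmed mean.** If `n > 2·t` and `x i ≤ y i` for every `i`,
then the `t`-trimmed mean of `x` is at most the `t`-trimmed mean of `y`. -/
theorem trimmedMean_mono {n t : ℕ} (hn : 2 * t < n) (x y : Fin n → ℝ)
    (h : ∀ i, x i ≤ y i) :
    trimmedMean t x ≤ trimmedMean t y := by
  unfold trimmedMean
  gcongr with k
  exact orderStat_mono h k
end

section
/- Let n, t be natural numbers with n > 2·t, indexing a check committee, and let M ⊆ Fin n be the set of malicious committee members. Let g : Fin n → ℝ be arbitrary per-validator scores. Define the extreme scores f by f j = 1 for j ∈ M and f j = g j for j ∉ M, and let h : Fin n → ℝ be any other manipulated scores with h j ≤ 1 for j ∈ M and h j = g j for j ∉ M. Then the t-trimmed mean of h is less than or equal to the t-trimmed mean of f. In particular, for a malicious client, the extreme check-score manipulation yields an aggregated check score at least as large as under any other manipulation. -/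
/-!
A sorted tuple has its `k`-th entry (counting from `0`) at most `a` exactly when more than `k` of
the original entries are at most `a`. Raising entries can only shrink these counts, so every order
statistic is monotone in the data, and so is the trimmed mean, an average of order statistics.
The extreme scores dominate every other manipulation entrywise.
-/

section Sorting

open scoped Finset

variable {α : Type*} [LinearOrder α] {n : ℕ}

theorem comp_sort_apply_le_iff (f : Fin n → α) (k : Fin n) (a : α) :
    (f ∘ Tuple.sort f) k ≤ a ↔ k < #{j | f j ≤ a} := by
  have card_eq : #{j | (f ∘ Tuple.sort f) j ≤ a} = #{j | f j ≤ a} :=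
    Finset.card_equiv (Tuple.sort f) (by simp)
  rw [← card_eq]
  exact (Tuple.lt_card_le_iff_apply_le_of_monotone (Tuple.monotone_sort f)).symm

theorem monotone_comp_sort : Monotone fun f : Fin n → α => f ∘ Tuple.sort f := by
  intro f g hfg k
  rw [comp_sort_apply_le_iff]
  calc
    (k : ℕ) < #{j | g j ≤ (g ∘ Tuple.sort g) k} := (comp_sort_apply_le_iff g k _).1 le_rfl
    _ ≤ #{j | f j ≤ (g ∘ Tuple.sort g) k} :=
      Finset.card_le_card (Finset.monotone_filter_right _ fun j _ => (hfg j).trans)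

end Sorting

theorem orderStat_mono_s4 {n : ℕ} (k : Fin n) : Monotone fun x : Fin n → ℝ => orderStat x k :=
  fun _ _ hxy => monotone_comp_sort hxy k

theorem trimmedMean_mono_s4 {n : ℕ} (t : ℕ) : Monotone (trimmedMean t : (Fin n → ℝ) → ℝ) :=
  fun _ _ hxy => div_le_div_of_nonneg_right
    (Finset.sum_le_sum fun k _ => orderStat_mono_s4 k hxy) (Nat.cast_nonneg _)

/-- **Optimality of the extreme manipulation for a malicious client.**
Let `n > 2·t` index a check committee with malicious members `M ⊆ Fin n`, and let
`g` be arbitrary per-validator scores. The extreme scores `f` set `f j = 1` for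
`j ∈ M` and `f j = g j` otherwise. For any other manipulated scores `h` with
`h j ≤ 1` for `j ∈ M` and `h j = g j` for `j ∉ M`, the `t`-trimmed mean of `h` is
at most the `t`-trimmed mean of `f`. -/
theorem trimmedMean_le_extreme_manipulation {n t : ℕ} (hn : 2 * t < n)
    (M : Finset (Fin n)) (g h : Fin n → ℝ)
    (hM : ∀ j ∈ M, h j ≤ 1) (hMc : ∀ j ∉ M, h j = g j) :
    trimmedMean t h ≤ trimmedMean t (fun j => if j ∈ M then (1 : ℝ) else g j) := by
  refine trimmedMean_mono_s4 t fun j => ?_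
  split_ifs with hj
  · exact hM j hj
  · exact (hMc j hj).le
end

section
/- Let m, k be natural numbers, M ⊆ Fin m a set of malicious clients, and s, s' : Fin m → ℝ aggregated check scores before and after the extreme manipulation. Suppose i ∈ M, s' i ≥ s i, s' j ≤ s j for every j ∉ M, and |{ j ∉ M : s j > s i }| + |M| ≤ k. Then |{ j : j ≠ i and s' j > s' i }| < k; that is, client i remains among the top k scorers after the manipulation. -/
section

variable {ι α : Type*} [Fintype ι] [DecidableEq ι] [Preorder α] [DecidableLT α]

theorem filter_outscoring_subset (M : Finset ι) (s s' : ι → α) (i : ι) (hi' : s i ≤ s' i)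
    (hben : ∀ j ∉ M, s' j ≤ s j) :
    Finset.univ.filter (fun j => j ≠ i ∧ s' i < s' j) ⊆
      Finset.univ.filter (fun j => j ∉ M ∧ s i < s j) ∪ M.erase i := by
  intro j hj
  obtain ⟨hne, hlt⟩ := (Finset.mem_filter_univ j).mp hj
  by_cases hjM : j ∈ M
  · exact Finset.mem_union_right _ (Finset.mem_erase_of_ne_of_mem hne hjM)
  · have hlt_before : s i < s j := (hi'.trans_lt hlt).trans_le (hben j hjM)
    exact Finset.mem_union_left _ ((Finset.mem_filter_univ j).mpr ⟨hjM, hlt_before⟩)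

theorem malicious_remains_top_k_general {k : ℕ} (M : Finset ι) (s s' : ι → α) (i : ι)
    (hi : i ∈ M) (hi' : s i ≤ s' i) (hben : ∀ j ∉ M, s' j ≤ s j)
    (htop : (Finset.univ.filter (fun j => j ∉ M ∧ s i < s j)).card + M.card ≤ k) :
    (Finset.univ.filter (fun j => j ≠ i ∧ s' i < s' j)).card < k :=
  calc (Finset.univ.filter (fun j => j ≠ i ∧ s' i < s' j)).card
      ≤ (Finset.univ.filter (fun j => j ∉ M ∧ s i < s j) ∪ M.erase i).card :=
        Finset.card_le_card (filter_outscoring_subset M s s' i hi' hben)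
    _ ≤ (Finset.univ.filter (fun j => j ∉ M ∧ s i < s j)).card + (M.erase i).card :=
        Finset.card_union_le _ _
    _ < (Finset.univ.filter (fun j => j ∉ M ∧ s i < s j)).card + M.card :=
        Nat.add_lt_add_left (Finset.card_erase_lt_of_mem hi) _
    _ ≤ k := htop

end

/-- **A malicious update included in aggregation remains included under the
extreme manipulation.** Let `M ⊆ Fin m` be the malicious clients and `s`, `s'`
the aggregated check scores before and after the extreme manipulation. Suppose
`i ∈ M`, `s' i ≥ s i`, `s' j ≤ s j` for every `j ∉ M`, and
`|{ j ∉ M : s j > s i }| + |M| ≤ k`. Then fewer than `k` other clients strictly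
outscore `i` after the manipulation, i.e. `i` remains among the top `k` scorers. -/
theorem malicious_remains_top_k {m k : ℕ} (M : Finset (Fin m))
    (s s' : Fin m → ℝ) (i : Fin m) (hi : i ∈ M) (hi' : s i ≤ s' i)
    (hben : ∀ j ∉ M, s' j ≤ s j)
    (htop : (Finset.univ.filter (fun j => j ∉ M ∧ s i < s j)).card + M.card ≤ k) :
    (Finset.univ.filter (fun j => j ≠ i ∧ s' i < s' j)).card < k :=
  malicious_remains_top_k_general M s s' i hi hi' hben htop
end

section
/- Let m be a natural number and x : Fin (2·m + 1) → ℝ a vector of values (e.g., norms of client updates), and let H ⊆ Fin (2·m + 1) be a set of honest indices with |H| ≥ m + 1. Then the median of x lies between the minimum and the maximum of the honest values: min_{j ∈ H} x j ≤ median(x) ≤ max_{j ∈ H} x j. -/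
/-- The median of a vector of odd length `2·m + 1` is its `m`-th order statistic
(0-indexed). -/
noncomputable def medianVec {m : ℕ} (x : Fin (2 * m + 1) → ℝ) : ℝ :=
  orderStat x ⟨m, by omega⟩

/-! Pigeonhole: exactly `k` positions precede rank `k` in sorted order, so a set of more than `k`
indices contains one at rank at least `k`, whose value bounds the `k`-th order statistic from above.
Counting the `n - 1 - k` positions after rank `k` gives the lower bound. At the median both counts
are `m`. -/

section SortedValues

variable {ι α : Type*} [Preorder α] {n : ℕ} {x : ι → α} {e : Fin n ≃ ι}

theorem exists_mem_sorted_le_of_lt_card (he : Monotone (x ∘ e)) {H : Finset ι} {k : Fin n}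
    (hk : k < H.card) : ∃ j ∈ H, x (e k) ≤ x j := by
  obtain ⟨j, hjH, hj⟩ : ∃ j ∈ H, j ∉ (Finset.Iio k).map e.toEmbedding :=
    Finset.exists_mem_notMem_of_card_lt_card (by rwa [Finset.card_map, Fin.card_Iio])
  have hkj : k ≤ e.symm j := by simpa only [Finset.mem_map_equiv, Finset.mem_Iio, not_lt] using hj
  exact ⟨j, hjH, by simpa only [Function.comp_apply, e.apply_symm_apply] using he hkj⟩

theorem exists_mem_le_sorted_of_le_add_card (he : Monotone (x ∘ e)) {H : Finset ι} {k : Fin n}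
    (hk : n ≤ k + H.card) : ∃ j ∈ H, x j ≤ x (e k) := by
  obtain ⟨j, hjH, hj⟩ : ∃ j ∈ H, j ∉ (Finset.Ioi k).map e.toEmbedding :=
    Finset.exists_mem_notMem_of_card_lt_card (by rw [Finset.card_map, Fin.card_Ioi]; omega)
  have hjk : e.symm j ≤ k := by simpa only [Finset.mem_map_equiv, Finset.mem_Ioi, not_lt] using hj
  exact ⟨j, hjH, by simpa only [Function.comp_apply, e.apply_symm_apply] using he hjk⟩

end SortedValues

theorem median_between_honest_min_max_general {α : Type*} [LinearOrder α] {n : ℕ}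
    (x : Fin n → α) {H : Finset (Fin n)} {k : Fin n}
    (hlower : n ≤ k + H.card) (hupper : k < H.card) :
    H.inf' (Finset.card_pos.mp (Nat.zero_lt_of_lt hupper)) x ≤ x (Tuple.sort x k) ∧
      x (Tuple.sort x k) ≤ H.sup' (Finset.card_pos.mp (Nat.zero_lt_of_lt hupper)) x := by
  obtain ⟨i, hiH, hi⟩ := exists_mem_le_sorted_of_le_add_card (Tuple.monotone_sort x) hlower
  obtain ⟨j, hjH, hj⟩ := exists_mem_sorted_le_of_lt_card (Tuple.monotone_sort x) hupper
  exact ⟨Finset.inf'_le_of_le x hiH hi, Finset.le_sup'_of_le x hjH hj⟩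

/-- **With an honest majority, the median lies in the range of honest values.**
Let `x : Fin (2·m + 1) → ℝ` and let `H` be a set of honest indices with
`|H| ≥ m + 1`. Then `min_{j ∈ H} x j ≤ median(x) ≤ max_{j ∈ H} x j`. -/
theorem median_between_honest_min_max {m : ℕ} (x : Fin (2 * m + 1) → ℝ)
    (H : Finset (Fin (2 * m + 1))) (hH : m + 1 ≤ H.card) :
    H.inf' (Finset.card_pos.mp (lt_of_lt_of_le (Nat.succ_pos m) hH)) x ≤ medianVec x ∧
      medianVec x ≤ H.sup' (Finset.card_pos.mp (lt_of_lt_of_le (Nat.succ_pos m) hH)) x :=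
  median_between_honest_min_max_general x (k := ⟨m, by omega⟩)
    (by simp only; omega) hH
end

section
/- Let p > 0 and r ≥ 1, and fix a secret x ∈ ZMod p. Consider the additive secret-sharing distribution in which the first r − 1 shares s₁, …, s_{r−1} are sampled independently and uniformly from ZMod p and the last share is set to s_r = x − (s₁ + ⋯ + s_{r−1}), so that the shares always sum to x. Then for every proper subset T ⊊ Fin r of parties, the joint distribution of the shares held by the parties in T is the uniform distribution on functions T → ZMod p, independent of the secret x. In particular, any coalition holding fewer than r shares learns nothing about x. -/
/-- Additive secret sharing of `x : ZMod p` among `r` parties: the first `r − 1`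
shares are sampled independently and uniformly from `ZMod p`, and the last share
is set so that all shares sum to `x`. The result is the pushforward of the uniform
distribution on `Fin (r − 1) → ZMod p` under the map producing the full share
vector. (The instance `[NeZero p]` says exactly that `p > 0`.) -/
noncomputable def additiveShares (p r : ℕ) [NeZero p] (x : ZMod p) :
    PMF (Fin r → ZMod p) :=
  PMF.map
    (fun g (i : Fin r) =>
      if h : (i : ℕ) < r - 1 then g ⟨(i : ℕ), h⟩ else x - ∑ j, g j)
    (PMF.uniformOfFintype (Fin (r - 1) → ZMod p))

/-! The sharing distribution is uniform on the set of all share vectors with sum `x`. Forgetting one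
share of such a vector is a bijection onto arbitrary vectors indexed by the remaining parties, since
the forgotten share is `x` minus the sum of the others. A proper coalition misses some party `k`, so
its view is a restriction of the vector with share `k` forgotten, and restricting a uniform function
to a subset of its domain gives a uniform function. -/

section Uniform

variable {α β ι κ : Type*} [Fintype α] [Nonempty α] [Fintype β] [Nonempty β]

theorem map_equiv_uniformOfFintype (e : α ≃ β) :
    (PMF.uniformOfFintype α).map e = PMF.uniformOfFintype β := by
  ext b
  rw [PMF.map_apply, tsum_eq_single (e.symm b)]
  · simp [Fintype.card_congr e]
  · intro a ha
    rw [if_neg fun h => ha (e.eq_symm_apply.mpr h.symm)]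

theorem map_fst_uniformOfFintype :
    (PMF.uniformOfFintype (α × β)).map Prod.fst = PMF.uniformOfFintype α := by
  classical
  ext a
  calc (PMF.uniformOfFintype (α × β)).map Prod.fst a
      = Fintype.card β * (Fintype.card α * Fintype.card β : ENNReal)⁻¹ := by
        simp [PMF.map_apply, tsum_fintype, Fintype.sum_prod_type_right]
    _ = (Fintype.card α : ENNReal)⁻¹ := by
        rw [ENNReal.mul_inv (by simp) (by simp), mul_left_comm,
          ENNReal.mul_inv_cancel (by simp) (by simp), mul_one]
    _ = PMF.uniformOfFintype α a := (PMF.uniformOfFintype_apply a).symm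

theorem map_comp_right_uniformOfFintype [Fintype ι] [DecidableEq ι] [Fintype κ] [DecidableEq κ]
    {j : κ → ι} (hj : Function.Injective j) :
    (PMF.uniformOfFintype (ι → α)).map (· ∘ j) = PMF.uniformOfFintype (κ → α) := by
  let split := Equiv.piEquivPiSubtypeProd (· ∈ Set.range j) fun _ => α
  let reindex : (Set.range j → α) ≃ (κ → α) := (Equiv.ofInjective j hj).symm.arrowCongr (.refl α)
  have comp_eq : (fun f : ι → α => f ∘ j) = reindex ∘ Prod.fst ∘ split := rfl
  rw [comp_eq, ← PMF.map_comp, ← PMF.map_comp, map_equiv_uniformOfFintype split,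
    map_fst_uniformOfFintype, map_equiv_uniformOfFintype reindex]

end Uniform

/-- The additive sharings of `x` among the parties `ι`: the share vectors that sum to `x`. As an
abbreviation for a subtype it inherits the `Fintype` instance. -/
abbrev AdditiveSharing (ι : Type*) [Fintype ι] {G : Type*} [AddCommGroup G] (x : G) : Type _ :=
  {s : ι → G // ∑ i, s i = x}

namespace AdditiveSharing

variable {ι G : Type*} [Fintype ι] [AddCommGroup G] {x : G}

/-- Forgetting the share of party `k`, as a bijection onto the vectors of shares of the other
parties; the inverse completes such a vector by the unique value of share `k` with sum `x`. -/
def forgetEquiv [DecidableEq ι] (k : ι) : AdditiveSharing ι x ≃ ({i // i ≠ k} → G) where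
  toFun s i := s.1 i
  invFun t := ⟨(Equiv.funSplitAt k G).symm (x - ∑ i, t i, t), by
    rw [Fintype.sum_eq_add_sum_subtype_ne _ k]
    simp [fun i : {i // i ≠ k} => (i.2 : ¬(i : ι) = k)]⟩
  left_inv := by
    rintro ⟨s, rfl⟩
    simp only [Subtype.mk.injEq, Fintype.sum_eq_add_sum_subtype_ne s k, add_sub_cancel_right]
    exact (Equiv.funSplitAt k G).symm_apply_apply s
  right_inv t := congrArg Prod.snd ((Equiv.funSplitAt k G).apply_symm_apply (x - ∑ i, t i, t))

@[simp]
theorem forgetEquiv_symm_apply_self [DecidableEq ι] (k : ι) (t : {i // i ≠ k} → G) :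
    ((forgetEquiv k).symm t : AdditiveSharing ι x).1 k = x - ∑ i, t i :=
  dif_pos rfl

@[simp]
theorem forgetEquiv_symm_apply_of_ne [DecidableEq ι] {k i : ι} (hi : i ≠ k)
    (t : {i // i ≠ k} → G) :
    ((forgetEquiv k).symm t : AdditiveSharing ι x).1 i = t ⟨i, hi⟩ :=
  congrFun ((forgetEquiv k).apply_symm_apply t) ⟨i, hi⟩

instance [Nonempty ι] : Nonempty (AdditiveSharing ι x) := by
  classical exact ⟨(forgetEquiv (Classical.arbitrary ι)).symm 0⟩

end AdditiveSharing

theorem additiveShares_privacy_general {ι G : Type*} [Fintype ι] [DecidableEq ι] [Nonempty ι]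
    [AddCommGroup G] [Fintype G] [DecidableEq G] (x : G) (T : Finset ι) (hT : T ⊂ Finset.univ) :
    (PMF.uniformOfFintype (AdditiveSharing ι x)).map (fun s (i : T) => s.1 i) =
      PMF.uniformOfFintype (T → G) := by
  obtain ⟨k, -, hk⟩ := Finset.exists_of_ssubset hT
  let incl : T → {i // i ≠ k} := fun i => ⟨i, fun h => hk (h ▸ i.2)⟩
  have incl_injective : Function.Injective incl := fun i j h =>
    Subtype.ext (congrArg Subtype.val h :)
  calc (PMF.uniformOfFintype (AdditiveSharing ι x)).map (fun s (i : T) => s.1 i)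
      = ((PMF.uniformOfFintype (AdditiveSharing ι x)).map
          (AdditiveSharing.forgetEquiv k)).map (· ∘ incl) := by rw [PMF.map_comp]; rfl
    _ = PMF.uniformOfFintype (T → G) := by
        rw [map_equiv_uniformOfFintype, map_comp_right_uniformOfFintype incl_injective]

theorem additiveShares_succ_eq_map_uniformOfFintype (p n : ℕ) [NeZero p] (x : ZMod p) :
    additiveShares p (n + 1) x =
      (PMF.uniformOfFintype (AdditiveSharing (Fin (n + 1)) x)).map Subtype.val := by
  let forgetLast : AdditiveSharing (Fin (n + 1)) x ≃ (Fin n → ZMod p) :=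
    (AdditiveSharing.forgetEquiv (Fin.last n)).trans
      ((finSuccAboveEquiv (Fin.last n)).symm.arrowCongr (.refl _))
  rw [← map_equiv_uniformOfFintype forgetLast.symm, PMF.map_comp, additiveShares]
  congr 1
  ext g i
  cases i using Fin.lastCases with
  | last =>
    simp [forgetLast, (finSuccAboveEquiv (Fin.last n)).symm.sum_comp g]
  | cast i =>
    simp [forgetLast, i.castSucc_ne_last, finSuccAboveEquiv_symm_apply_last]

/-- **Perfect privacy of additive secret sharing.**
For `p > 0`, `r ≥ 1` and any secret `x : ZMod p`, and for every proper subset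
`T ⊊ Fin r` of parties, the joint distribution of the shares held by the parties
in `T` is the uniform distribution on functions `T → ZMod p`, independent of the
secret `x`: any coalition holding fewer than `r` shares learns nothing about `x`. -/
theorem additiveShares_privacy (p r : ℕ) [NeZero p] (hr : 1 ≤ r)
    (x : ZMod p) (T : Finset (Fin r)) (hT : T ⊂ Finset.univ) :
    PMF.map (fun f (i : T) => f i) (additiveShares p r x) =
      PMF.uniformOfFintype ((i : T) → ZMod p) := by
  obtain ⟨n, rfl⟩ := Nat.exists_eq_add_of_le' hr
  rw [additiveShares_succ_eq_map_uniformOfFintype, PMF.map_comp]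
  exact additiveShares_privacy_general x T hT
end
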